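/- Let m ≥ 0, σ > 0 and K(y,λ) = exp(−(y/σ)(√(λ + m²/σ²) − m/σ)). Then for every λ > 0, ∫₀^∞ G(∞,y) (∂_y K(y,λ))² σ² dy = (1/4)(1 − (m/σ)(λ + m²/σ²)^{−1/2}), where G(∞,y) = (1/(2m))(1 − e^{−(2m/σ²)y}). -/

import Mathlib

open MeasureTheory Set Filter Topology

/-!
`G(∞, ·)` is the primitive of `e^{-κz} / σ²` with `κ = 2m/σ²`, also when `m = 0`,
and `(∂_y K)²` is a multiple of an exponential. The integral is therefore a Laplace transform of a
primitive, which the convolution theorem turns into a multiple of `1 / (r (r + κ))`, where `r` is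
the decay rate of `(∂_y K)²`.
-/

theorem integral_exp_neg_mul_smul_primitive {E : Type*} [NormedAddCommGroup E]
    [NormedSpace ℝ E] [CompleteSpace E] {f : ℝ → E} {r : ℝ} (hr : 0 < r)
    (hf : IntegrableOn (fun t ↦ Real.exp (-r * t) • f t) (Ioi 0)) :
    ∫ y in Ioi (0 : ℝ), Real.exp (-r * y) • ∫ t in (0 : ℝ)..y, f t
      = r⁻¹ • ∫ t in Ioi (0 : ℝ), Real.exp (-r * t) • f t := by
  have hr' : -r < 0 := neg_lt_zero.mpr hr
  have exp_smul_primitive_eq_convolution (y : ℝ) : Real.exp (-r * y) • ∫ t in (0 : ℝ)..y, f t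
      = ∫ t in (0 : ℝ)..y, Real.exp (-r * (y - t)) • Real.exp (-r * t) • f t := by
    rw [← intervalIntegral.integral_smul]
    refine intervalIntegral.integral_congr fun t _ ↦ ?_
    rw [smul_smul, ← Real.exp_add]
    congr 2
    ring
  have integral_exp_neg_mul : ∫ y in Ioi (0 : ℝ), Real.exp (-r * y) = r⁻¹ := by
    rw [integral_exp_mul_Ioi hr', mul_zero, Real.exp_zero, neg_div_neg_eq, one_div]
  simp_rw [exp_smul_primitive_eq_convolution, ← integral_exp_neg_mul]
  exact integral_posConvolution hf (integrableOn_exp_mul_Ioi hr' 0)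
    (ContinuousLinearMap.lsmul ℝ ℝ).flip

theorem integral_exp_neg_mul_mul_primitive_exp {r κ : ℝ} (hr : 0 < r) (hrκ : 0 < r + κ) :
    ∫ y in Ioi (0 : ℝ), Real.exp (-r * y) * ∫ t in (0 : ℝ)..y, Real.exp (-κ * t)
      = (r * (r + κ))⁻¹ := by
  have hrκ' : -(r + κ) < 0 := neg_lt_zero.mpr hrκ
  have exp_smul_exp (t : ℝ) :
      Real.exp (-r * t) • Real.exp (-κ * t) = Real.exp (-(r + κ) * t) := by
    rw [smul_eq_mul, ← Real.exp_add]
    ring_nf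
  have laplace := integral_exp_neg_mul_smul_primitive (f := fun t ↦ Real.exp (-κ * t)) hr
    (by simpa only [exp_smul_exp] using integrableOn_exp_mul_Ioi hrκ' 0)
  simp_rw [exp_smul_exp, integral_exp_mul_Ioi hrκ', smul_eq_mul] at laplace
  rw [laplace, mul_zero, Real.exp_zero, neg_div_neg_eq, one_div, mul_inv]

theorem integral_exp_mul_eq_div {κ : ℝ} (hκ : κ ≠ 0) (a b : ℝ) :
    ∫ t in a..b, Real.exp (κ * t) = (Real.exp (κ * b) - Real.exp (κ * a)) / κ := by
  rw [intervalIntegral.integral_comp_mul_left Real.exp hκ, integral_exp, smul_eq_mul,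
    inv_mul_eq_div]

/-- The function `G(∞, ·)` for the coefficients `a = σ` and `b = -2m`: the solution of
`σ² G' = e^{-2my/σ²}` vanishing at `0`. The integral form covers `m = 0` without a case
distinction. -/
noncomputable def greenAtInfinity (m σ y : ℝ) : ℝ :=
  (∫ z in (0 : ℝ)..y, Real.exp (-(2 * m / σ ^ 2) * z)) / σ ^ 2

theorem greenAtInfinity_zero_left (σ y : ℝ) : greenAtInfinity 0 σ y = y / σ ^ 2 := by
  simp [greenAtInfinity]

theorem greenAtInfinity_of_ne_zero {m σ : ℝ} (hm : m ≠ 0) (hσ : σ ≠ 0) (y : ℝ) :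
    greenAtInfinity m σ y = 1 / (2 * m) * (1 - Real.exp (-(2 * m / σ ^ 2) * y)) := by
  have hκ : -(2 * m / σ ^ 2) ≠ 0 := by simp [hm, hσ]
  rw [greenAtInfinity, integral_exp_mul_eq_div hκ, mul_zero, Real.exp_zero]
  field_simp
  ring

theorem integral_exp_neg_mul_mul_greenAtInfinity {m σ r : ℝ} (hr : 0 < r)
    (hrm : 0 < r + 2 * m / σ ^ 2) :
    ∫ y in Ioi (0 : ℝ), Real.exp (-r * y) * greenAtInfinity m σ y
      = (r * (r + 2 * m / σ ^ 2))⁻¹ / σ ^ 2 := by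
  simp_rw [greenAtInfinity, ← mul_div_assoc]
  rw [integral_div, integral_exp_neg_mul_mul_primitive_exp hr hrm]

theorem deriv_exp_mul_sq (a y : ℝ) :
    deriv (fun x ↦ Real.exp (a * x)) y ^ 2 = a ^ 2 * Real.exp (2 * a * y) := by
  rw [((hasDerivAt_const_mul a).exp).deriv, mul_pow, ← Real.exp_nat_mul, mul_comm]
  push_cast
  ring_nf

theorem integral_greenAtInfinity_mul_deriv_exp_sq {m σ a : ℝ} (hσ : σ ≠ 0) (ha : 0 ≤ a)
    (ham : 0 < a * σ ^ 2 + m) :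
    ∫ y in Ioi (0 : ℝ), greenAtInfinity m σ y * deriv (fun x ↦ Real.exp (-a * x)) y ^ 2
      = a / (4 * (a * σ ^ 2 + m)) := by
  rcases ha.eq_or_lt with rfl | ha
  · simp
  have hrate : 2 * a + 2 * m / σ ^ 2 = 2 * (a * σ ^ 2 + m) / σ ^ 2 := by field_simp
  calc ∫ y in Ioi (0 : ℝ), greenAtInfinity m σ y * deriv (fun x ↦ Real.exp (-a * x)) y ^ 2
    _ = ∫ y in Ioi (0 : ℝ), a ^ 2 * (Real.exp (-(2 * a) * y) * greenAtInfinity m σ y) := by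
      refine integral_congr_ae (.of_forall fun y ↦ ?_)
      simp only [deriv_exp_mul_sq]
      ring_nf
    _ = a ^ 2 * ((2 * a * (2 * a + 2 * m / σ ^ 2))⁻¹ / σ ^ 2) := by
      rw [integral_const_mul, integral_exp_neg_mul_mul_greenAtInfinity (by positivity)
        (by rw [hrate]; positivity)]
    _ = a / (4 * (a * σ ^ 2 + m)) := by
      rw [hrate]
      field_simp
      norm_num

theorem multiplier_symbol_brownian_negative_drift_general
    (m σ lam : ℝ) (hσ : 0 < σ) (hpos : 0 < lam + m ^ 2 / σ ^ 2)
    (hdrift : m / σ ≤ Real.sqrt (lam + m ^ 2 / σ ^ 2))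
    (K : ℝ → ℝ)
    (hK : ∀ y, K y = Real.exp (-(y / σ) * (Real.sqrt (lam + m ^ 2 / σ ^ 2) - m / σ)))
    (Ginf : ℝ → ℝ)
    (hG : ∀ y, Ginf y =
      if m = 0 then y / σ ^ 2 else 1 / (2 * m) * (1 - Real.exp (-(2 * m / σ ^ 2) * y))) :
    ∫ y in Ioi (0 : ℝ), Ginf y * deriv K y ^ 2 * σ ^ 2
      = 1 / 4 * (1 - m / σ * (Real.sqrt (lam + m ^ 2 / σ ^ 2))⁻¹) := by
  have hs : 0 < Real.sqrt (lam + m ^ 2 / σ ^ 2) := Real.sqrt_pos.mpr hpos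
  generalize Real.sqrt (lam + m ^ 2 / σ ^ 2) = s at *
  have hK' : K = fun y ↦ Real.exp (-((s - m / σ) / σ) * y) := by
    ext y
    rw [hK]
    ring_nf
  have hG' : Ginf = greenAtInfinity m σ := by
    ext y
    rw [hG]
    split_ifs with h
    · rw [h, greenAtInfinity_zero_left]
    · rw [greenAtInfinity_of_ne_zero h hσ.ne']
  have hdecay : (s - m / σ) / σ * σ ^ 2 + m = σ * s := by
    field_simp
    ring
  rw [integral_mul_const, hK', hG', integral_greenAtInfinity_mul_deriv_exp_sq hσ.ne'
    (div_nonneg (sub_nonneg.mpr hdrift) hσ.le) (by rw [hdecay]; positivity), hdecay]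
  field_simp

/-- For `m ≥ 0`, `σ > 0` and `K(y,λ) = exp(−(y/σ)(√(λ + m²/σ²) − m/σ))`, one has for `λ > 0`:
`∫₀^∞ G(∞,y)(∂_y K(y,λ))² σ² dy = (1/4)(1 − (m/σ)(λ + m²/σ²)^{−1/2})`, where
`G(∞,y) = (1/(2m))(1 − e^{−(2m/σ²)y})` (interpreted as `y/σ²` when `m = 0`). -/
theorem multiplier_symbol_brownian_negative_drift
    (m σ lam : ℝ) (hm : 0 ≤ m) (hσ : 0 < σ) (hlam : 0 < lam)
    (K : ℝ → ℝ)
    (hK : ∀ y, K y = Real.exp (-(y/σ) * (Real.sqrt (lam + m^2/σ^2) - m/σ)))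
    (Ginf : ℝ → ℝ)
    (hG : ∀ y, Ginf y =
      if m = 0 then y/σ^2 else 1/(2*m) * (1 - Real.exp (-(2*m/σ^2) * y))) :
    ∫ y in Set.Ioi (0:ℝ), Ginf y * (deriv K y)^2 * σ^2
      = 1/4 * (1 - (m/σ) * (Real.sqrt (lam + m^2/σ^2))⁻¹) := by
  exact multiplier_symbol_brownian_negative_drift_general m σ lam hσ (by positivity)
    (Real.le_sqrt_of_sq_le (by rw [div_pow]; linarith)) K hK Ginf hG
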